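/- Let L, N be a lightlike frame along the unit-speed spacelike curve γ̂ with α_L(0) ≠ 0, set x_L = γ̂(0) + L(0)/α_L(0) and g_L(u) = ⟨γ̂(u) − x_L, γ̂(u) − x_L⟩. Then for every integer k ≥ 3: g_L(0) = g_L′(0) = ⋯ = g_L^{(k)}(0) = 0 if and only if σ_L(0) = σ_L′(0) = ⋯ = σ_L^{(k−3)}(0) = 0. Similarly, if α_N(0) ≠ 0, x_N = γ̂(0) + N(0)/α_N(0) and g_N(u) = ⟨γ̂(u) − x_N, γ̂(u) − x_N⟩, then for every k ≥ 3: g_N(0) = ⋯ = g_N^{(k)}(0) = 0 if and only if σ_N(0) = ⋯ = σ_N^{(k−3)}(0) = 0. -/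

import Mathlib

open scoped Topology

noncomputable section

/-- Points/vectors of Lorentz–Minkowski 3-space `ℝ³₁`. -/
abbrev R3 : Type := Fin 3 → ℝ

/-- The Lorentz–Minkowski scalar product `⟨x,y⟩ = -x₀y₀ + x₁y₁ + x₂y₂`. -/
def mink (x y : R3) : ℝ := -(x 0 * y 0) + x 1 * y 1 + x 2 * y 2

/-- `(L, N)` is a lightlike frame along the unit-speed spacelike curve `γ` on `I`:
`γ, L, N` are smooth on `I`, `⟨e,e⟩ = 1` (with `e = γ'`), `⟨e,L⟩ = ⟨e,N⟩ = 0`,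
`⟨L,L⟩ = ⟨N,N⟩ = 0` and `⟨L,N⟩ = 1` on `I`. -/
structure LightlikeFrame (I : Set ℝ) (γ L N : ℝ → R3) : Prop where
  smooth_gamma : ContDiffOn ℝ (⊤ : ℕ∞) γ I
  smooth_L : ContDiffOn ℝ (⊤ : ℕ∞) L I
  smooth_N : ContDiffOn ℝ (⊤ : ℕ∞) N I
  unit_speed : ∀ u ∈ I, mink (deriv γ u) (deriv γ u) = 1
  eL : ∀ u ∈ I, mink (deriv γ u) (L u) = 0
  eN : ∀ u ∈ I, mink (deriv γ u) (N u) = 0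
  LL : ∀ u ∈ I, mink (L u) (L u) = 0
  NN : ∀ u ∈ I, mink (N u) (N u) = 0
  LN : ∀ u ∈ I, mink (L u) (N u) = 1

/-- `α_L = ⟨γ'', L⟩`. -/
def alphaL (γ L : ℝ → R3) (u : ℝ) : ℝ := mink (deriv (deriv γ) u) (L u)

/-- `α_N = ⟨γ'', N⟩`. -/
def alphaN (γ N : ℝ → R3) (u : ℝ) : ℝ := mink (deriv (deriv γ) u) (N u)

/-- `α_G = ⟨L, N'⟩`. -/
def alphaG (L N : ℝ → R3) (u : ℝ) : ℝ := mink (L u) (deriv N u)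

/-- `σ_L = α_L' + α_L α_G`. -/
def sigmaL (γ L N : ℝ → R3) (u : ℝ) : ℝ :=
  deriv (alphaL γ L) u + alphaL γ L u * alphaG L N u

/-- `σ_N = α_N' - α_N α_G`. -/
def sigmaN (γ L N : ℝ → R3) (u : ℝ) : ℝ :=
  deriv (alphaN γ N) u - alphaN γ N u * alphaG L N u

open scoped ContDiff

/-- The derivatives of `f` of order less than `m` all vanish at `x`. -/
def VanishesToOrder (m : ℕ) (f : ℝ → ℝ) (x : ℝ) : Prop :=
  ∀ l < m, deriv^[l] f x = 0

namespace VanishesToOrder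

variable {m n : ℕ} {f g : ℝ → ℝ} {x : ℝ} {s : Set ℝ}

theorem succ_iff : VanishesToOrder (m + 1) f x ↔ f x = 0 ∧ VanishesToOrder m (deriv f) x := by
  refine ⟨fun h => ⟨h 0 m.succ_pos, fun l hl => ?_⟩, fun h l hl => ?_⟩
  · simpa using h (l + 1) (by omega)
  · cases l with
    | zero => exact h.1
    | succ l => simpa using h.2 l (by omega)

theorem mono (h : VanishesToOrder n f x) (hmn : m ≤ n) : VanishesToOrder m f x :=
  fun l hl => h l (by omega)

theorem congr (h : VanishesToOrder m f x) (hfg : f =ᶠ[𝓝 x] g) : VanishesToOrder m g x := by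
  induction m generalizing f g with
  | zero => exact fun l hl => absurd hl (by omega)
  | succ m ih =>
    rw [succ_iff] at h ⊢
    exact ⟨hfg.eq_of_nhds ▸ h.1, ih h.2 hfg.deriv⟩

theorem congr_on (h : VanishesToOrder m f x) (hs : IsOpen s) (hx : x ∈ s) (hfg : s.EqOn f g) :
    VanishesToOrder m g x :=
  h.congr (hfg.eventuallyEq_of_mem (hs.mem_nhds hx))

end VanishesToOrder

section SmoothOnOpen

variable {m : ℕ} {f g : ℝ → ℝ} {x : ℝ} {s : Set ℝ}

theorem ContDiffOn.deriv_of_isOpen_infty {E : Type*} [NormedAddCommGroup E] [NormedSpace ℝ E]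
    {f : ℝ → E} (hf : ContDiffOn ℝ ∞ f s) (hs : IsOpen s) : ContDiffOn ℝ ∞ (deriv f) s :=
  hf.deriv_of_isOpen hs (by simp)

theorem ContDiffOn.hasDerivAt_of_isOpen {E : Type*} [NormedAddCommGroup E] [NormedSpace ℝ E]
    {f : ℝ → E} (hf : ContDiffOn ℝ ∞ f s) (hs : IsOpen s) (hx : x ∈ s) :
    HasDerivAt f (deriv f x) x :=
  ((hf.differentiableOn (by simp)).differentiableAt (hs.mem_nhds hx)).hasDerivAt

namespace VanishesToOrder

theorem add (hs : IsOpen s) (hx : x ∈ s) (hf : ContDiffOn ℝ ∞ f s) (hg : ContDiffOn ℝ ∞ g s)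
    (hfv : VanishesToOrder m f x) (hgv : VanishesToOrder m g x) :
    VanishesToOrder m (f + g) x := by
  induction m generalizing f g with
  | zero => exact fun l hl => absurd hl (by omega)
  | succ m ih =>
    rw [succ_iff] at hfv hgv ⊢
    refine ⟨by simp [hfv.1, hgv.1], ?_⟩
    refine (ih (hf.deriv_of_isOpen_infty hs) (hg.deriv_of_isOpen_infty hs) hfv.2 hgv.2).congr_on
      hs hx fun u hu => ?_
    exact ((hf.hasDerivAt_of_isOpen hs hu).add (hg.hasDerivAt_of_isOpen hs hu)).deriv.symm

theorem mul_left (hs : IsOpen s) (hx : x ∈ s) (hf : ContDiffOn ℝ ∞ f s)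
    (hg : ContDiffOn ℝ ∞ g s) (hgv : VanishesToOrder m g x) :
    VanishesToOrder m (f * g) x := by
  induction m generalizing f g with
  | zero => exact fun l hl => absurd hl (by omega)
  | succ m ih =>
    have hgm := hgv.mono m.le_succ
    rw [succ_iff] at hgv ⊢
    refine ⟨by simp [hgv.1], ?_⟩
    have hf' := hf.deriv_of_isOpen_infty hs
    have hg' := hg.deriv_of_isOpen_infty hs
    refine (add hs hx (hf'.mul hg) (hf.mul hg') (ih hf' hg hgm) (ih hf hg' hgv.2)).congr_on
      hs hx fun u hu => ?_
    exact ((hf.hasDerivAt_of_isOpen hs hu).mul (hg.hasDerivAt_of_isOpen hs hu)).deriv.symm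

theorem of_mul_right (hs : IsOpen s) (hx : x ∈ s) (hf : ContDiffOn ℝ ∞ f s)
    (hg : ContDiffOn ℝ ∞ g s) (hgx : g x ≠ 0) (h : VanishesToOrder m (f * g) x) :
    VanishesToOrder m f x := by
  induction m generalizing f with
  | zero => exact fun l hl => absurd hl (by omega)
  | succ m ih =>
    have hfm := ih hf (h.mono m.le_succ)
    rw [succ_iff] at h ⊢
    have hf' := hf.deriv_of_isOpen_infty hs
    have hg' := hg.deriv_of_isOpen_infty hs
    refine ⟨by simpa [hgx] using h.1, ih hf' ?_⟩
    refine (add hs hx ((hf.mul hg).deriv_of_isOpen_infty hs) (hg'.neg.mul hf) h.2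
      (mul_left hs hx hg'.neg hf hfm)).congr_on hs hx fun u hu => ?_
    have := ((hf.hasDerivAt_of_isOpen hs hu).mul (hg.hasDerivAt_of_isOpen hs hu)).deriv
    change deriv (f * g) u + -deriv g u * f u = deriv f u * g u
    rw [this]
    ring

end VanishesToOrder

/-- If `(A, B, P)` solves a linear system forced by `σ * C` with `C x ≠ 0` and zero initial
values at `x`, the vanishing order of `A` at `x` is governed by that of `σ`. -/
theorem vanishesToOrder_add_two_iff_of_linear_system {A B P C σ p q r t : ℝ → ℝ}
    (hs : IsOpen s) (hx : x ∈ s)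
    (hA : ContDiffOn ℝ ∞ A s) (hB : ContDiffOn ℝ ∞ B s) (hP : ContDiffOn ℝ ∞ P s)
    (hC : ContDiffOn ℝ ∞ C s) (hσ : ContDiffOn ℝ ∞ σ s) (hp : ContDiffOn ℝ ∞ p s)
    (hq : ContDiffOn ℝ ∞ q s) (hr : ContDiffOn ℝ ∞ r s) (ht : ContDiffOn ℝ ∞ t s)
    (hA' : s.EqOn (deriv A) (p * B + P)) (hB' : s.EqOn (deriv B) (q * A + r * B))
    (hP' : s.EqOn (deriv P) (t * A + σ * C))
    (hA0 : A x = 0) (hB0 : B x = 0) (hP0 : P x = 0) (hCx : C x ≠ 0) :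
    VanishesToOrder (m + 2) A x ↔ VanishesToOrder m σ x := by
  have step {j : ℕ} {f g : ℝ → ℝ} (hf0 : f x = 0) (hf' : s.EqOn (deriv f) g)
      (hg : VanishesToOrder j g x) : VanishesToOrder (j + 1) f x :=
    VanishesToOrder.succ_iff.2 ⟨hf0, hg.congr_on hs hx hf'.symm⟩
  have unstep {j : ℕ} {f g : ℝ → ℝ} (hf' : s.EqOn (deriv f) g)
      (hf : VanishesToOrder (j + 1) f x) : VanishesToOrder j g x :=
    (VanishesToOrder.succ_iff.1 hf).2.congr_on hs hx hf'
  constructor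
  · intro hAv
    have hBv (j : ℕ) (hj : j ≤ m + 2) : VanishesToOrder j B x := by
      induction j with
      | zero => exact fun l hl => absurd hl (by omega)
      | succ j ih =>
        exact step hB0 hB' (.add hs hx (hq.mul hA) (hr.mul hB)
          (.mul_left hs hx hq hA (hAv.mono (by omega))) (.mul_left hs hx hr hB (ih (by omega))))
    have hPv : VanishesToOrder (m + 1) P x := by
      refine (VanishesToOrder.add hs hx ((hp.mul hB).add hP) (hp.neg.mul hB) (unstep hA' hAv)
        (.mul_left hs hx hp.neg hB (hBv _ (by omega)))).congr_on hs hx fun u _ => ?_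
      simp
    refine .of_mul_right hs hx hσ hC hCx ?_
    refine (VanishesToOrder.add hs hx ((ht.mul hA).add (hσ.mul hC)) (ht.neg.mul hA)
      (unstep hP' hPv) (.mul_left hs hx ht.neg hA (hAv.mono (by omega)))).congr_on
      hs hx fun u _ => ?_
    simp
  · intro hσv
    have key (j : ℕ) (hj : j ≤ m + 1) :
        VanishesToOrder j A x ∧ VanishesToOrder j B x ∧ VanishesToOrder j P x := by
      induction j with
      | zero => refine ⟨?_, ?_, ?_⟩ <;> exact fun l hl => absurd hl (by omega)
      | succ j ih =>
        obtain ⟨hAv, hBv, hPv⟩ := ih (by omega)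
        have hσC : VanishesToOrder j (σ * C) x :=
          mul_comm C σ ▸ .mul_left hs hx hC hσ (hσv.mono (by omega))
        exact ⟨step hA0 hA' (.add hs hx (hp.mul hB) hP (.mul_left hs hx hp hB hBv) hPv),
          step hB0 hB' (.add hs hx (hq.mul hA) (hr.mul hB) (.mul_left hs hx hq hA hAv)
            (.mul_left hs hx hr hB hBv)),
          step hP0 hP' (.add hs hx (ht.mul hA) (hσ.mul hC) (.mul_left hs hx ht hA hAv) hσC)⟩
    obtain ⟨-, hBv, hPv⟩ := key (m + 1) le_rfl
    exact step hA0 hA' (.add hs hx (hp.mul hB) hP (.mul_left hs hx hp hB hBv) hPv)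

end SmoothOnOpen

section Mink

theorem mink_comm (x y : R3) : mink x y = mink y x := by
  simp only [mink]; ring

/-- Expansion of the scalar product in a lightlike frame. -/
theorem mink_eq_of_lightlike_basis {e L N : R3} (hee : mink e e = 1) (heL : mink e L = 0)
    (heN : mink e N = 0) (hLL : mink L L = 0) (hNN : mink N N = 0) (hLN : mink L N = 1)
    (v w : R3) :
    mink v w = mink v e * mink w e + mink v L * mink w N + mink v N * mink w L := by
  simp only [mink] at *
  let M : Matrix (Fin 3) (Fin 3) ℝ := !![e 0, e 1, e 2; L 0, L 1, L 2; N 0, N 1, N 2]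
  let M' : Matrix (Fin 3) (Fin 3) ℝ :=
    !![-e 0, -N 0, -L 0; e 1, N 1, L 1; e 2, N 2, L 2]
  have h : M * M' = 1 := by
    ext i j
    fin_cases i <;> fin_cases j <;>
      simp [M, M', Matrix.mul_apply, Fin.sum_univ_three] <;> linarith
  have h' : M' * M = 1 := mul_eq_one_comm.1 h
  have entry (i j : Fin 3) := congrFun (congrFun h' i) j
  have h00 := entry 0 0
  have h01 := entry 0 1
  have h02 := entry 0 2
  have h11 := entry 1 1
  have h12 := entry 1 2
  have h22 := entry 2 2
  simp [M, M', Matrix.mul_apply, Fin.sum_univ_three] at h00 h01 h02 h11 h12 h22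
  linear_combination v 0 * w 0 * h00 + (v 0 * w 1 + v 1 * w 0) * (-h01)
    + (v 0 * w 2 + v 2 * w 0) * (-h02) - v 1 * w 1 * h11 - (v 1 * w 2 + v 2 * w 1) * h12
    - v 2 * w 2 * h22

theorem HasDerivAt.mink {v w : ℝ → R3} {v' w' : R3} {u : ℝ} (hv : HasDerivAt v v' u)
    (hw : HasDerivAt w w' u) :
    HasDerivAt (fun u => mink (v u) (w u)) (mink v' (w u) + mink (v u) w') u := by
  rw [hasDerivAt_pi] at hv hw
  refine ((((hv 0).mul (hw 0)).neg.add ((hv 1).mul (hw 1))).add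
    ((hv 2).mul (hw 2))).congr_deriv ?_
  simp only [_root_.mink]
  ring

theorem ContDiffOn.mink {v w : ℝ → R3} {s : Set ℝ} (hv : ContDiffOn ℝ ∞ v s)
    (hw : ContDiffOn ℝ ∞ w s) : ContDiffOn ℝ ∞ (fun u => mink (v u) (w u)) s := by
  rw [contDiffOn_pi] at hv hw
  exact (((hv 0).mul (hw 0)).neg.add ((hv 1).mul (hw 1))).add ((hv 2).mul (hw 2))

end Mink

namespace LightlikeFrame

variable {s : Set ℝ} {γ L N : ℝ → R3}

theorem swap (h : LightlikeFrame s γ L N) : LightlikeFrame s γ N L :=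
  ⟨h.smooth_gamma, h.smooth_N, h.smooth_L, h.unit_speed, h.eN, h.eL, h.NN, h.LL,
    fun u hu => mink_comm (L u) (N u) ▸ h.LN u hu⟩

/-- Differentiating a constant scalar product of two smooth vector fields. -/
theorem mink_deriv_add_eq_zero (hs : IsOpen s) {v w : ℝ → R3} (hv : ContDiffOn ℝ ∞ v s)
    (hw : ContDiffOn ℝ ∞ w s) {c : ℝ} (hc : ∀ u ∈ s, mink (v u) (w u) = c) {u : ℝ}
    (hu : u ∈ s) : mink (deriv v u) (w u) + mink (v u) (deriv w u) = 0 := by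
  have h1 := (hv.hasDerivAt_of_isOpen hs hu).mink (hw.hasDerivAt_of_isOpen hs hu)
  have h2 : (fun u => mink (v u) (w u)) =ᶠ[𝓝 u] fun _ => c :=
    Filter.eventually_of_mem (hs.mem_nhds hu) hc
  rw [← h1.deriv, h2.deriv_eq, deriv_const]

theorem sigmaN_eqOn (hs : IsOpen s) (h : LightlikeFrame s γ L N) :
    s.EqOn (sigmaL γ N L) (sigmaN γ L N) := by
  intro u hu
  have hG := mink_deriv_add_eq_zero hs h.smooth_L h.smooth_N h.LN hu
  have hα : alphaN γ N = alphaL γ N := rfl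
  simp only [sigmaL, sigmaN, hα, alphaG]
  rw [mink_comm] at hG
  linear_combination alphaL γ N u * hG

theorem vanishesToOrder_iff (hs : IsOpen s) (h0 : (0 : ℝ) ∈ s) (h : LightlikeFrame s γ L N)
    (hα : alphaL γ L 0 ≠ 0) (m : ℕ) :
    VanishesToOrder (m + 3) (fun u => mink (γ u - (γ 0 + (alphaL γ L 0)⁻¹ • L 0))
      (γ u - (γ 0 + (alphaL γ L 0)⁻¹ • L 0))) 0 ↔ VanishesToOrder m (sigmaL γ L N) 0 := by
  set x₀ := γ 0 + (alphaL γ L 0)⁻¹ • L 0 with hx₀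
  have sγ := h.smooth_gamma
  have sL := h.smooth_L
  have sN := h.smooth_N
  have se := sγ.deriv_of_isOpen_infty hs
  have sk := se.deriv_of_isOpen_infty hs
  have sw : ContDiffOn ℝ ∞ (fun u => γ u - x₀) s := sγ.sub contDiffOn_const
  have sαL : ContDiffOn ℝ ∞ (alphaL γ L) s := sk.mink sL
  have sαN : ContDiffOn ℝ ∞ (alphaN γ N) s := sk.mink sN
  have sαG : ContDiffOn ℝ ∞ (alphaG L N) s := sL.mink (sN.deriv_of_isOpen_infty hs)
  have sσ : ContDiffOn ℝ ∞ (sigmaL γ L N) s :=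
    (sαL.deriv_of_isOpen_infty hs).add (sαL.mul sαG)
  have dw {u : ℝ} (hu : u ∈ s) : HasDerivAt (fun u => γ u - x₀) (deriv γ u) u :=
    (sγ.hasDerivAt_of_isOpen hs hu).sub_const x₀
  have expand {u : ℝ} (hu : u ∈ s) := mink_eq_of_lightlike_basis (h.unit_speed u hu) (h.eL u hu)
    (h.eN u hu) (h.LL u hu) (h.NN u hu) (h.LN u hu)
  have hw0 : γ 0 - x₀ = -((alphaL γ L 0)⁻¹ • L 0) := by simp [hx₀]
  have mink_w0 (v : R3) : mink (γ 0 - x₀) v = -((alphaL γ L 0)⁻¹ * mink (L 0) v) := by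
    rw [hw0]; simp only [mink, Pi.neg_apply, Pi.smul_apply, smul_eq_mul]; ring
  have mink_w0' : mink (γ 0 - x₀) (γ 0 - x₀) = 0 := by
    rw [mink_w0, mink_comm, mink_w0, h.LL 0 h0]; simp
  set A : ℝ → ℝ := fun u => mink (γ u - x₀) (deriv γ u) with hA
  set B : ℝ → ℝ := fun u => mink (γ u - x₀) (L u) with hB
  set C : ℝ → ℝ := fun u => mink (γ u - x₀) (N u) with hC
  have sA : ContDiffOn ℝ ∞ A s := sw.mink se
  have sB : ContDiffOn ℝ ∞ B s := sw.mink sL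
  have sC : ContDiffOn ℝ ∞ C s := sw.mink sN
  have hA0 : A 0 = 0 := by simp only [hA]; rw [mink_w0, mink_comm, h.eL 0 h0]; simp
  have hB0 : B 0 = 0 := by simp only [hB]; rw [mink_w0, h.LL 0 h0]; simp
  have hC0 : C 0 = -(alphaL γ L 0)⁻¹ := by simp only [hC]; rw [mink_w0, h.LN 0 h0]; simp
  have hdC {u : ℝ} (hu : u ∈ s) :
      HasDerivAt C (-alphaN γ N u * A u + alphaG L N u * C u) u := by
    refine ((dw hu).mink (sN.hasDerivAt_of_isOpen hs hu)).congr_deriv ?_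
    have e1 := mink_deriv_add_eq_zero hs se sN h.eN hu
    have e2 := mink_deriv_add_eq_zero hs sN sN h.NN hu
    rw [mink_comm (N u)] at e2
    rw [h.eN u hu, expand hu (γ u - x₀) (deriv N u)]
    rw [mink_comm (deriv γ u)] at e1
    simp only [alphaN, alphaG, mink_comm (L u), hA, hC]
    linear_combination mink (γ u - x₀) (deriv γ u) * e1 + mink (γ u - x₀) (L u) * e2 / 2
  have hA' : s.EqOn (deriv A) (alphaN γ N * B + (1 + alphaL γ L * C)) := by
    intro u hu
    refine ((dw hu).mink (se.hasDerivAt_of_isOpen hs hu)).deriv.trans ?_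
    have e1 := mink_deriv_add_eq_zero hs se se h.unit_speed hu
    rw [mink_comm (deriv γ u)] at e1
    rw [h.unit_speed u hu, expand hu (γ u - x₀) (deriv (deriv γ) u)]
    simp only [Pi.add_apply, Pi.mul_apply, Pi.one_apply, alphaN, alphaL, hB, hC]
    linear_combination mink (γ u - x₀) (deriv γ u) * e1 / 2
  have hB' : s.EqOn (deriv B) (-alphaL γ L * A + -alphaG L N * B) := by
    intro u hu
    refine ((dw hu).mink (sL.hasDerivAt_of_isOpen hs hu)).deriv.trans ?_
    have e1 := mink_deriv_add_eq_zero hs se sL h.eL hu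
    have e2 := mink_deriv_add_eq_zero hs sL sL h.LL hu
    have e3 := mink_deriv_add_eq_zero hs sL sN h.LN hu
    rw [mink_comm (L u)] at e2
    rw [mink_comm (deriv γ u)] at e1
    rw [h.eL u hu, expand hu (γ u - x₀) (deriv L u)]
    simp only [Pi.add_apply, Pi.mul_apply, Pi.neg_apply, alphaL, alphaG, hA, hB]
    linear_combination mink (γ u - x₀) (deriv γ u) * e1 + mink (γ u - x₀) (L u) * e3
      + mink (γ u - x₀) (N u) * e2 / 2
  have hP' : s.EqOn (deriv (1 + alphaL γ L * C))
      (-(alphaL γ L * alphaN γ N) * A + sigmaL γ L N * C) := by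
    intro u hu
    refine (((sαL.hasDerivAt_of_isOpen hs hu).mul (hdC hu)).const_add 1).deriv.trans ?_
    simp only [Pi.add_apply, Pi.mul_apply, Pi.neg_apply, sigmaL]
    ring
  have sP : ContDiffOn ℝ ∞ (1 + alphaL γ L * C) s :=
    (contDiffOn_const (c := (1 : ℝ))).add (sαL.mul sC)
  rw [← vanishesToOrder_add_two_iff_of_linear_system hs h0 sA sB sP sC sσ sαN sαL.neg sαG.neg (sαL.mul sαN).neg hA' hB' hP'
    hA0 hB0 (by simp [hC0, hα]) (by simp [hC0, hα]), VanishesToOrder.succ_iff]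
  have hg' : s.EqOn (deriv fun u => mink (γ u - x₀) (γ u - x₀)) ((fun _ => 2) * A) := by
    intro u hu
    refine ((dw hu).mink (dw hu)).deriv.trans ?_
    simp only [Pi.mul_apply, hA, mink_comm (deriv γ u)]
    ring
  refine ⟨fun hv => ?_, fun hv => ⟨mink_w0', ?_⟩⟩
  · refine .of_mul_right hs h0 sA contDiffOn_const two_ne_zero ?_
    exact mul_comm A _ ▸ hv.2.congr_on hs h0 hg'
  · exact (VanishesToOrder.mul_left hs h0 contDiffOn_const sA hv).congr_on hs h0 hg'.symm

/-- The contact criterion with closed index ranges. -/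
theorem forall_le_deriv_iff (hs : IsOpen s) (h0 : (0 : ℝ) ∈ s) (h : LightlikeFrame s γ L N)
    (hα : alphaL γ L 0 ≠ 0) {k : ℕ} (hk : 3 ≤ k) :
    (∀ l ≤ k, deriv^[l] (fun u => mink (γ u - (γ 0 + (alphaL γ L 0)⁻¹ • L 0))
      (γ u - (γ 0 + (alphaL γ L 0)⁻¹ • L 0))) 0 = 0) ↔
    ∀ l ≤ k - 3, deriv^[l] (sigmaL γ L N) 0 = 0 := by
  have key := h.vanishesToOrder_iff hs h0 hα (k - 3 + 1)
  rw [show k - 3 + 1 + 3 = k + 1 by omega] at key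
  simpa only [VanishesToOrder, Nat.lt_succ_iff] using key

end LightlikeFrame

/-- With `x_L = γ̂(0) + L(0)/α_L(0)` and
`g_L(u) = ⟨γ̂(u) - x_L, γ̂(u) - x_L⟩`, for every `k ≥ 3`:
`g_L(0) = g_L'(0) = ⋯ = g_L⁽ᵏ⁾(0) = 0` iff `σ_L(0) = ⋯ = σ_L⁽ᵏ⁻³⁾(0) = 0`;
similarly for `g_N` and `σ_N`. -/
theorem contact_with_lightcone (a b : ℝ) (γ L N : ℝ → R3)
    (hframe : LightlikeFrame (Set.Ioo a b) γ L N)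
    (h0 : (0 : ℝ) ∈ Set.Ioo a b) :
    (alphaL γ L 0 ≠ 0 → ∀ k : ℕ, 3 ≤ k →
      ((∀ l ≤ k, deriv^[l]
          (fun u => mink (γ u - (γ 0 + (alphaL γ L 0)⁻¹ • L 0))
                         (γ u - (γ 0 + (alphaL γ L 0)⁻¹ • L 0))) 0 = 0) ↔
       (∀ l ≤ k - 3, deriv^[l] (sigmaL γ L N) 0 = 0))) ∧
    (alphaN γ N 0 ≠ 0 → ∀ k : ℕ, 3 ≤ k →
      ((∀ l ≤ k, deriv^[l]
          (fun u => mink (γ u - (γ 0 + (alphaN γ N 0)⁻¹ • N 0))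
                         (γ u - (γ 0 + (alphaN γ N 0)⁻¹ • N 0))) 0 = 0) ↔
       (∀ l ≤ k - 3, deriv^[l] (sigmaN γ L N) 0 = 0))) := by
  refine ⟨fun hα k hk => hframe.forall_le_deriv_iff isOpen_Ioo h0 hα hk, fun hα k hk => ?_⟩
  refine (hframe.swap.forall_le_deriv_iff isOpen_Ioo h0 hα hk).trans ?_
  have hσ := hframe.sigmaN_eqOn isOpen_Ioo
  have iff : VanishesToOrder (k - 3 + 1) (sigmaL γ N L) 0 ↔
      VanishesToOrder (k - 3 + 1) (sigmaN γ L N) 0 :=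
    ⟨fun h => h.congr_on isOpen_Ioo h0 hσ, fun h => h.congr_on isOpen_Ioo h0 hσ.symm⟩
  simpa only [VanishesToOrder, Nat.lt_succ_iff] using iff
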